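/- Let μ_n be probability measures on A^{V_n} for finite d-regular edge-labeled graphs G_n locally converging to T_d, with μ_n → μ in the local weak* sense for a Γ-invariant measure μ on A^{V(T_d)}. Then limsup_{n→∞} (1/|V_n|) H(μ_n) ≤ H_perc(μ), where H_perc(μ) = ∫_0^1 ∫ H_μ(σ_φ | σ_{S\{φ}}) dθ_p(S) dp is the percolative entropy. -/

import Mathlib

open scoped Classical BigOperators

noncomputable section

/-- Shannon entropy of a finitely supported probability vector (natural log,
with the convention `0 · log 0 = 0`, automatic since `Real.log 0 = 0`). -/
def shEnt {Ω : Type*} [Fintype Ω] (p : Ω → ℝ) : ℝ :=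
  -∑ ω, p ω * Real.log (p ω)

/-- Marginal of a probability vector on `V → A` on the coordinates in `S`. -/
def marg {V A : Type*} [Fintype V] [Fintype A] (μ : (V → A) → ℝ) (S : Finset V) :
    ({x // x ∈ S} → A) → ℝ :=
  fun η => ∑ x : V → A, if (∀ i : S, x i = η i) then μ x else 0

/-- Conditional Shannon entropy `H_μ(σ_v | σ_S)`, via the chain rule
`H(σ_{S ∪ {v}}) - H(σ_S)`. -/
def condEnt {V A : Type*} [Fintype V] [Fintype A] (μ : (V → A) → ℝ) (v : V)
    (S : Finset V) : ℝ :=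
  shEnt (marg μ (insert v S)) - shEnt (marg μ S)


open MeasureTheory Filter

def margM {V A : Type*} [Fintype A] [MeasurableSpace A] (μ : Measure (V → A))
    (S : Finset V) : ({x // x ∈ S} → A) → ℝ :=
  fun η => (μ {x | ∀ i : S, x (i : V) = η i}).toReal

def condEntM {V A : Type*} [Fintype A] [MeasurableSpace A] (μ : Measure (V → A))
    (v : V) (T : Finset V) : ℝ :=
  shEnt (margM μ (insert v T)) - shEnt (margM μ T)

/-- Conditional entropy given a possibly infinite set, via finite exhaustion. -/
def condEntInf {V A : Type*} [Fintype A] [MeasurableSpace A] (μ : Measure (V → A))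
    (v : V) (S : Set V) : ℝ :=
  ⨅ T : {T : Finset V // (T : Set V) ⊆ S}, condEntM μ v (T : Finset V)

/-- Percolative entropy `∫_0^1 ∫ H_μ(σ_φ | σ_{S ∖ {φ}}) dθ_p(S) dp`, with the
root `φ = 1 ∈ Γ` and subsets of `Γ` identified with Boolean configurations. -/
def Hperc {Γ A : Type*} [Group Γ] [Fintype A] [MeasurableSpace A]
    (θ : ℝ → Measure (Γ → Bool)) (μ : Measure (Γ → A)) : ℝ :=
  ∫ p in (0:ℝ)..1, ∫ x : Γ → Bool,
    condEntInf μ (1 : Γ) ({h | x h = true} \ {(1 : Γ)}) ∂(θ p)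

/-- The radius-`r` pull-back/pushforward of `μ_n` at `v`: the law on
`A^{T_d(r)}` of the pull-back name `(σ_{γ_n(g)(v)})_{g ∈ B_r}` when `σ ∼ μ_n`. -/
def pushName {Γ A W : Type*} [Group Γ] [Fintype A] [Fintype W]
    (B : Finset Γ) (γ : Γ →* Equiv.Perm W) (μW : (W → A) → ℝ) (v : W) :
    ({g // g ∈ B} → A) → ℝ :=
  fun η => ∑ x : W → A, if (∀ g : B, x (γ (g : Γ) v) = η g) then μW x else 0

/-- Total variation distance between two probability vectors. -/
def tvDist {Ω : Type*} [Fintype Ω] (ν ν' : Ω → ℝ) : ℝ :=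
  (1/2) * ∑ ω, |ν ω - ν' ω|

/-! ### Entropy of random variables on a finite weighted space -/

/-- The law of `X` under the weight `m`. -/
def lawOf {Ω α : Type*} [Fintype Ω] (m : Ω → ℝ) (X : Ω → α) (a : α) : ℝ :=
  ∑ ω, if X ω = a then m ω else 0

/-- The joint law of the coordinates `X i`, `i ∈ S`, under the weight `m`. -/
def jointLaw {Ω I A : Type*} [Fintype Ω] (m : Ω → ℝ) (X : I → Ω → A) (S : Finset I) :
    ({i // i ∈ S} → A) → ℝ :=
  fun η => ∑ ω, if (∀ i : S, X i ω = η i) then m ω else 0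

/-- The entropy of the coordinates `X i`, `i ∈ S`, under the weight `m`. -/
def jointEnt {Ω I A : Type*} [Fintype Ω] [Fintype A] (m : Ω → ℝ) (X : I → Ω → A)
    (S : Finset I) : ℝ :=
  shEnt (jointLaw m X S)

section Entropy

variable {Ω I A α β ζ : Type*} [Fintype Ω] {m : Ω → ℝ}

lemma lawOf_nonneg (hm : ∀ ω, 0 ≤ m ω) (X : Ω → α) (a : α) : 0 ≤ lawOf m X a :=
  Finset.sum_nonneg fun ω _ => by split_ifs <;> simp [hm]

lemma le_lawOf (hm : ∀ ω, 0 ≤ m ω) (X : Ω → α) (ω : Ω) : m ω ≤ lawOf m X (X ω) := by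
  have := Finset.single_le_sum (f := fun ω' => if X ω' = X ω then m ω' else 0)
    (fun ω' _ => by split_ifs <;> simp [hm]) (Finset.mem_univ ω)
  simpa [lawOf] using this

lemma sum_lawOf_mul [Fintype α] (X : Ω → α) (G : α → ℝ) :
    ∑ a, lawOf m X a * G a = ∑ ω, m ω * G (X ω) := by
  simp only [lawOf, Finset.sum_mul]
  rw [Finset.sum_comm]
  simp [ite_mul]

lemma sum_lawOf [Fintype α] (X : Ω → α) : ∑ a, lawOf m X a = ∑ ω, m ω := by
  simpa using sum_lawOf_mul (m := m) X (fun _ => 1)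

lemma shEnt_lawOf [Fintype α] (X : Ω → α) :
    shEnt (lawOf m X) = -∑ ω, m ω * Real.log (lawOf m X (X ω)) := by
  rw [shEnt, sum_lawOf_mul X (fun a => Real.log (lawOf m X a))]

lemma jointLaw_eq (X : I → Ω → A) (S : Finset I) :
    jointLaw m X S = lawOf m (fun ω (i : S) => X i ω) := by
  ext η; simp [jointLaw, lawOf, funext_iff]

variable [Fintype A]

lemma jointEnt_eq_of_iff [Fintype α] (X : I → Ω → A) (S : Finset I) (Y : Ω → α)
    (h : ∀ ω ω', (∀ i ∈ S, X i ω = X i ω') ↔ Y ω = Y ω') :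
    jointEnt m X S = shEnt (lawOf m Y) := by
  rw [jointEnt, jointLaw_eq, shEnt_lawOf, shEnt_lawOf]
  have : ∀ ω, lawOf m (fun ω (i : S) => X i ω) (fun i : S => X i ω) = lawOf m Y (Y ω) := by
    intro ω
    simp [lawOf, funext_iff, ← h]
  simp [this]

lemma lawOf_comp_ge (hm : ∀ ω, 0 ≤ m ω) (Y : Ω → β) (φ : β → ζ) (b : β) :
    lawOf m Y b ≤ lawOf m (fun ω => φ (Y ω)) (φ b) := by
  refine Finset.sum_le_sum fun ω _ => ?_
  split_ifs with h1 h2 h2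
  · exact le_rfl
  · exact absurd (congrArg φ h1) h2
  · exact hm ω
  · exact le_rfl

lemma shEnt_comp_le [Fintype β] [Fintype ζ] (hm : ∀ ω, 0 ≤ m ω) (Y : Ω → β) (φ : β → ζ) :
    shEnt (lawOf m (fun ω => φ (Y ω))) ≤ shEnt (lawOf m Y) := by
  rw [shEnt_lawOf, shEnt_lawOf]
  refine neg_le_neg (Finset.sum_le_sum fun ω _ => ?_)
  rcases (hm ω).eq_or_lt with h | h
  · simp [← h]
  · exact mul_le_mul_of_nonneg_left (Real.log_le_log (h.trans_le (le_lawOf hm Y ω))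
      (lawOf_comp_ge hm Y φ _)) h.le

lemma sum_lawOf_pair [Fintype α] (X : Ω → α) (Z : Ω → ζ) (z : ζ) :
    ∑ a, lawOf m (fun ω => (X ω, Z ω)) (a, z) = lawOf m Z z := by
  simp only [lawOf, Prod.mk.injEq]
  rw [Finset.sum_comm]
  refine Finset.sum_congr rfl fun ω _ => ?_
  by_cases h : Z ω = z <;> simp [h]

/-- Conditioning on more information decreases the conditional entropy. -/
lemma shEnt_pair_sub_le [Fintype α] [Fintype β] [Fintype ζ] (hm : ∀ ω, 0 ≤ m ω)
    (X : Ω → α) (Y : Ω → β) (φ : β → ζ) :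
    shEnt (lawOf m (fun ω => (X ω, Y ω))) - shEnt (lawOf m Y) ≤
      shEnt (lawOf m (fun ω => (X ω, φ (Y ω)))) - shEnt (lawOf m (fun ω => φ (Y ω))) := by
  set Pxy := lawOf m (fun ω => (X ω, Y ω)) with hPxy
  set Py := lawOf m Y with hPy
  set Pxz := lawOf m (fun ω => (X ω, φ (Y ω))) with hPxz
  set Pz := lawOf m (fun ω => φ (Y ω)) with hPz
  let G : α × β → ℝ := fun c => Pxz (c.1, φ c.2) * Py c.2 / (Pxy c * Pz (φ c.2))
  have hpt : ∀ ω, m ω - m ω * G (X ω, Y ω) ≤ m ω * Real.log (Pxy (X ω, Y ω))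
      + m ω * Real.log (Pz (φ (Y ω))) - m ω * Real.log (Pxz (X ω, φ (Y ω)))
      - m ω * Real.log (Py (Y ω)) := by
    intro ω
    rcases (hm ω).eq_or_lt with h | h
    · simp [← h]
    have h1 : 0 < Pxy (X ω, Y ω) := h.trans_le (le_lawOf hm (fun ω => (X ω, Y ω)) ω)
    have h2 : 0 < Py (Y ω) := h.trans_le (le_lawOf hm Y ω)
    have h3 : 0 < Pxz (X ω, φ (Y ω)) :=
      h.trans_le (le_lawOf hm (fun ω => (X ω, φ (Y ω))) ω)
    have h4 : 0 < Pz (φ (Y ω)) := h.trans_le (le_lawOf hm (fun ω => φ (Y ω)) ω)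
    have hG : 0 < G (X ω, Y ω) := by dsimp only [G]; positivity
    have hlog := Real.log_le_sub_one_of_pos hG
    have hexp : Real.log (G (X ω, Y ω)) = Real.log (Pxz (X ω, φ (Y ω))) + Real.log (Py (Y ω))
        - (Real.log (Pxy (X ω, Y ω)) + Real.log (Pz (φ (Y ω)))) := by
      dsimp only [G]
      rw [Real.log_div (by positivity) (by positivity), Real.log_mul h3.ne' h2.ne',
        Real.log_mul h1.ne' h4.ne']
    have := mul_le_mul_of_nonneg_left hlog h.le
    rw [hexp] at this
    linarith
  have hsum : ∑ ω, m ω * G (X ω, Y ω) ≤ ∑ ω, m ω := by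
    rw [← sum_lawOf_mul (fun ω => (X ω, Y ω)) G, Fintype.sum_prod_type_right,
      ← sum_lawOf (m := m) Y]
    refine Finset.sum_le_sum fun b _ => ?_
    have hb : 0 ≤ Py b := lawOf_nonneg hm _ _
    have hz : 0 ≤ Pz (φ b) := lawOf_nonneg hm _ _
    calc ∑ a, lawOf m (fun ω => (X ω, Y ω)) (a, b) * G (a, b)
        ≤ ∑ a, Pxz (a, φ b) * (Py b / Pz (φ b)) := by
          refine Finset.sum_le_sum fun a _ => ?_
          have ha : 0 ≤ Pxz (a, φ b) := lawOf_nonneg hm _ _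
          rcases (lawOf_nonneg hm (fun ω => (X ω, Y ω)) (a, b)).eq_or_lt with h | h
          · rw [← h, zero_mul]; positivity
          · refine le_of_eq ?_
            rw [← hPxy] at h ⊢
            dsimp only [G]
            rw [mul_div_assoc', mul_div_mul_left _ _ h.ne', mul_div_assoc]
      _ = Pz (φ b) * (Py b / Pz (φ b)) := by
          rw [← Finset.sum_mul, hPxz, sum_lawOf_pair X (fun ω => φ (Y ω))]
      _ ≤ Py b := by
          rcases hz.eq_or_lt with h | h
          · rw [← h]; simpa using hb
          · rw [mul_div_cancel₀ _ h.ne']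
  have key := Finset.sum_le_sum fun ω (_ : ω ∈ Finset.univ) => hpt ω
  simp only [Finset.sum_sub_distrib, Finset.sum_add_distrib] at key
  rw [hPxy, hPy, hPxz, hPz, shEnt_lawOf, shEnt_lawOf, shEnt_lawOf, shEnt_lawOf,
    ← hPxy, ← hPy, ← hPxz, ← hPz]
  linarith

lemma shEnt_le_log_card [Fintype α] [Nonempty α] {p : α → ℝ} (hp : ∀ a, 0 ≤ p a)
    (hp1 : ∑ a, p a = 1) : shEnt p ≤ Real.log (Fintype.card α) := by
  have hK : (0 : ℝ) < Fintype.card α := by exact_mod_cast Fintype.card_pos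
  have hpt : ∀ a, -(p a * Real.log (p a)) - p a * Real.log (Fintype.card α) ≤
      (Fintype.card α : ℝ)⁻¹ - p a := by
    intro a
    rcases (hp a).eq_or_lt with h | h
    · simp [← h]
    have hlog := mul_le_mul_of_nonneg_left
      (Real.log_le_sub_one_of_pos (x := (p a * Fintype.card α)⁻¹) (by positivity)) h.le
    rw [Real.log_inv, Real.log_mul h.ne' hK.ne'] at hlog
    have : p a * ((p a * Fintype.card α)⁻¹ - 1) = (Fintype.card α : ℝ)⁻¹ - p a := by
      field_simp
    linarith
  have key := Finset.sum_le_sum fun a (_ : a ∈ Finset.univ) => hpt a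
  simp only [Finset.sum_sub_distrib, Finset.sum_neg_distrib, ← Finset.sum_mul, hp1] at key
  simp [hK.ne'] at key
  rw [shEnt]
  linarith

lemma jointEnt_insert (X : I → Ω → A) (v : I) (S : Finset I) :
    jointEnt m X (insert v S) = shEnt (lawOf m (fun ω => (X v ω, fun i : S => X i ω))) :=
  jointEnt_eq_of_iff X _ _ fun ω ω' => by simp [funext_iff]

lemma jointEnt_mono (hm : ∀ ω, 0 ≤ m ω) (X : I → Ω → A) (v : I) (S : Finset I) :
    jointEnt m X S ≤ jointEnt m X (insert v S) := by
  rw [jointEnt_insert, jointEnt, jointLaw_eq]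
  exact shEnt_comp_le hm (fun ω => (X v ω, fun i : S => X i ω)) Prod.snd

lemma jointEnt_submodular (hm : ∀ ω, 0 ≤ m ω) (X : I → Ω → A) (v : I) {S T : Finset I}
    (h : T ⊆ S) :
    jointEnt m X (insert v S) - jointEnt m X S ≤
      jointEnt m X (insert v T) - jointEnt m X T := by
  rw [jointEnt_insert, jointEnt_insert, jointEnt, jointEnt, jointLaw_eq, jointLaw_eq]
  exact shEnt_pair_sub_le hm (X v) (fun ω (i : S) => X i ω)
    (fun (f : S → A) (i : T) => f ⟨i, h i.2⟩)

lemma jointEnt_empty (hm1 : ∑ ω, m ω = 1) (X : I → Ω → A) : jointEnt m X ∅ = 0 := by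
  rw [jointEnt_eq_of_iff X ∅ (fun _ => ()) (by simp)]
  simp [shEnt, lawOf, hm1]

lemma jointEnt_insert_sub_le [Nonempty A] (hm : ∀ ω, 0 ≤ m ω) (hm1 : ∑ ω, m ω = 1)
    (X : I → Ω → A) (v : I) (S : Finset I) :
    jointEnt m X (insert v S) - jointEnt m X S ≤ Real.log (Fintype.card A) := by
  refine (jointEnt_submodular hm X v (Finset.empty_subset S)).trans ?_
  rw [jointEnt_empty hm1, sub_zero, jointEnt_eq_of_iff X _ (X v) (by simp)]
  exact shEnt_le_log_card (lawOf_nonneg hm _) (by rw [sum_lawOf, hm1])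

lemma jointEnt_image {J : Type*} (X : I → Ω → A) (f : J → I) (T : Finset J) :
    jointEnt m X (T.image f) = jointEnt m (fun j => X (f j)) T := by
  rw [jointEnt_eq_of_iff X _ (fun ω (j : T) => X (f j) ω) (by simp [funext_iff]),
    ← jointLaw_eq (fun j => X (f j)), jointEnt]

lemma continuous_jointEnt (X : I → Ω → A) (T : Finset I) :
    Continuous fun m : Ω → ℝ => jointEnt m X T := by
  have hc : Continuous fun x : ℝ => x * Real.log x := Real.continuous_mul_log
  unfold jointEnt shEnt jointLaw
  refine (continuous_finsetSum _ fun η _ => hc.comp ?_).neg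
  refine continuous_finsetSum _ fun ω _ => ?_
  split_ifs <;> fun_prop

/-- Extension of the coordinate maps on `B → A` to all indices. -/
def coordExt [Nonempty A] (B : Finset I) (i : I) (η : {i // i ∈ B} → A) : A :=
  if h : i ∈ B then η ⟨i, h⟩ else Classical.arbitrary A

lemma jointLaw_jointLaw [Nonempty A] (X : I → Ω → A) {B T : Finset I} (h : T ⊆ B) :
    jointLaw (jointLaw m X B) (coordExt B) T = jointLaw m X T := by
  ext η
  have := sum_lawOf_mul (m := m) (fun ω (i : B) => X i ω)
    (fun ξ => if ∀ i : T, coordExt B i ξ = η i then 1 else 0)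
  simp only [mul_ite, mul_one, mul_zero, ← jointLaw_eq] at this
  rw [jointLaw, this, jointLaw]
  refine Finset.sum_congr rfl fun ω _ => if_congr ?_ rfl rfl
  refine forall_congr' fun i => ?_
  simp [coordExt, h i.2]

lemma jointEnt_jointLaw [Nonempty A] (X : I → Ω → A) {B T : Finset I} (h : T ⊆ B) :
    jointEnt (jointLaw m X B) (coordExt B) T = jointEnt m X T := by
  rw [jointEnt, jointLaw_jointLaw X h, jointEnt]

lemma shEnt_eq_jointEnt_univ [Fintype I] (m : (I → A) → ℝ) :
    shEnt m = jointEnt m (fun i x => x i) Finset.univ := by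
  rw [jointEnt_eq_of_iff _ _ id (by simp [funext_iff])]
  congr 1
  ext x
  exact ((Finset.sum_eq_single x (by simp +contextual) (by simp)).trans (by simp)).symm

end Entropy

/-! ### Bernoulli averages over subsets of a finite set -/

/-- The average of `F` over the random subset of `I` keeping each point with probability `p`. -/
def bernAvg {ι : Type*} (p : ℝ) (I : Finset ι) (F : Finset ι → ℝ) : ℝ :=
  ∑ S ∈ I.powerset, p ^ S.card * (1 - p) ^ (I.card - S.card) * F S

section Bernoulli

variable {ι κ : Type*} {p : ℝ} {I : Finset ι} {F G : Finset ι → ℝ}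

lemma bernAvg_empty : bernAvg p ∅ F = F ∅ := by simp [bernAvg]

lemma bernAvg_congr (h : ∀ S ⊆ I, F S = G S) : bernAvg p I F = bernAvg p I G :=
  Finset.sum_congr rfl fun S hS => by rw [h S (Finset.mem_powerset.1 hS)]

lemma bernAvg_insert {a : ι} (ha : a ∉ I) :
    bernAvg p (insert a I) F =
      (1 - p) * bernAvg p I F + p * bernAvg p I (fun S => F (insert a S)) := by
  rw [bernAvg, Finset.sum_powerset_insert ha, bernAvg, bernAvg, Finset.mul_sum, Finset.mul_sum]
  congr 1 <;> refine Finset.sum_congr rfl fun S hS => ?_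
  · have hS := Finset.card_le_card (Finset.mem_powerset.1 hS)
    rw [Finset.card_insert_of_notMem ha, Nat.sub_add_comm hS, pow_succ]
    ring
  · have haS : a ∉ S := fun h => ha (Finset.mem_powerset.1 hS h)
    rw [Finset.card_insert_of_notMem ha, Finset.card_insert_of_notMem haS,
      Nat.add_sub_add_right, pow_succ]
    ring

lemma bernAvg_mono (hp : p ∈ Set.Icc (0 : ℝ) 1) (h : ∀ S ⊆ I, F S ≤ G S) :
    bernAvg p I F ≤ bernAvg p I G := by
  refine Finset.sum_le_sum fun S hS => mul_le_mul_of_nonneg_left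
    (h S (Finset.mem_powerset.1 hS)) ?_
  have h0 := hp.1
  have h1 := sub_nonneg.2 hp.2
  positivity

lemma bernAvg_const (c : ℝ) : bernAvg p I (fun _ => c) = c := by
  rw [bernAvg, ← Finset.sum_mul, Finset.sum_pow_mul_eq_add_pow]
  simp

lemma bernAvg_sub : bernAvg p I (fun S => F S - G S) = bernAvg p I F - bernAvg p I G := by
  simp [bernAvg, mul_sub]

lemma bernAvg_add_const (c : ℝ) :
    bernAvg p I (fun S => F S + c) = bernAvg p I F + c := by
  conv_rhs => rw [← bernAvg_const (p := p) (I := I) c]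
  simp [bernAvg, mul_add, Finset.sum_add_distrib]

lemma bernAvg_inter (J K : Finset ι) :
    bernAvg p (J ∪ K) (fun S => F (S ∩ J)) = bernAvg p J F := by
  induction K using Finset.induction_on with
  | empty =>
    rw [Finset.union_empty]
    exact bernAvg_congr fun S hS => by rw [Finset.inter_eq_left.2 hS]
  | insert a K _ ih =>
    by_cases haJ : a ∈ J ∪ K
    · rw [Finset.union_insert, Finset.insert_eq_of_mem haJ, ih]
    · have : a ∉ J := fun h => haJ (Finset.mem_union_left _ h)
      rw [Finset.union_insert, bernAvg_insert haJ]
      simp only [Finset.insert_inter_of_notMem this, ih]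
      ring

lemma bernAvg_image (J : Finset κ) (f : κ → ι) (hf : Set.InjOn f J) (F : Finset ι → ℝ) :
    bernAvg p (J.image f) F = bernAvg p J (fun S => F (S.image f)) := by
  induction J using Finset.induction_on generalizing F with
  | empty => simp [bernAvg_empty]
  | insert a J ha ih =>
    have hf' : Set.InjOn f J := hf.mono (by simp)
    have hfa : f a ∉ J.image f := by
      intro h
      obtain ⟨b, hb, hab⟩ := Finset.mem_image.1 h
      exact ha (hf (by simp [hb]) (by simp) hab ▸ hb)
    rw [Finset.image_insert, bernAvg_insert hfa, bernAvg_insert ha, ih hf', ih hf']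
    simp only [Finset.image_insert]

/-- Russo's formula. -/
lemma hasDerivAt_bernAvg (p : ℝ) (I : Finset ι) (F : Finset ι → ℝ) :
    HasDerivAt (fun p => bernAvg p I F)
      (∑ v ∈ I, bernAvg p I (fun S => F (insert v S) - F (S.erase v))) p := by
  induction I using Finset.induction_on generalizing F with
  | empty => simpa [bernAvg_empty] using hasDerivAt_const p (F ∅)
  | insert a I ha ih =>
    simp only [bernAvg_insert ha]
    have h := (((hasDerivAt_id p).const_sub 1).mul (ih F)).add
      ((hasDerivAt_id p).mul (ih fun S => F (insert a S)))
    refine h.congr_deriv ?_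
    rw [Finset.sum_insert ha, Finset.sum_add_distrib, ← Finset.mul_sum, ← Finset.mul_sum]
    have hnot : ∀ S ⊆ I, a ∉ S := fun S hS h => ha (hS h)
    have e1 : bernAvg p I (fun S => F (insert a S) - F (S.erase a)) =
        bernAvg p I (fun S => F (insert a S)) - bernAvg p I F := by
      rw [← bernAvg_sub]
      exact bernAvg_congr fun S hS => by rw [Finset.erase_eq_of_notMem (hnot S hS)]
    have e2 : bernAvg p I (fun S => F (insert a (insert a S)) - F ((insert a S).erase a)) =
        bernAvg p I (fun S => F (insert a S)) - bernAvg p I F := by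
      rw [← bernAvg_sub]
      exact bernAvg_congr fun S hS => by
        rw [Finset.insert_idem, Finset.erase_insert (hnot S hS)]
    have e3 : ∑ v ∈ I, bernAvg p I
          (fun S => F (insert v (insert a S)) - F ((insert a S).erase v)) =
        ∑ v ∈ I, bernAvg p I (fun S => F (insert a (insert v S)) - F (insert a (S.erase v))) := by
      refine Finset.sum_congr rfl fun v hv => bernAvg_congr fun S hS => ?_
      have hva : a ≠ v := fun h => ha (h ▸ hv)
      rw [Finset.insert_comm, Finset.erase_insert_of_ne hva]
    rw [e1, e2, e3]
    simp only [id]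
    ring

lemma continuous_bernAvg (I : Finset ι) (F : Finset ι → ℝ) :
    Continuous fun p => bernAvg p I F := by
  unfold bernAvg
  fun_prop

lemma integral_sum_bernAvg (I : Finset ι) (F : Finset ι → ℝ) :
    ∫ p in (0 : ℝ)..1, ∑ v ∈ I, bernAvg p I (fun S => F (insert v S) - F (S.erase v)) =
      F I - F ∅ := by
  rw [intervalIntegral.integral_eq_sub_of_hasDerivAt
    (fun p _ => hasDerivAt_bernAvg p I F)
    ((continuous_finsetSum _ fun v _ => continuous_bernAvg I _).intervalIntegrable _ _)]
  congr 1
  · rw [bernAvg, Finset.sum_eq_single I]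
    · simp
    · intro S hS hne
      have := Finset.card_lt_card ((Finset.mem_powerset.1 hS).ssubset_of_ne hne)
      simp [Nat.sub_ne_zero_of_lt this]
    · simp
  · rw [bernAvg, Finset.sum_eq_single ∅]
    · simp
    · intro S _ hne
      simp [hne]
    · simp

lemma integral_filter_eq_bernAvg {ν : Measure (ι → Bool)} [IsProbabilityMeasure ν]
    (hp : p ∈ Set.Icc (0 : ℝ) 1)
    (hν : ∀ (T : Finset ι) (g : ι → Bool), ν {x | ∀ i ∈ T, x i = g i} =
      ∏ i ∈ T, ENNReal.ofReal (if g i then p else 1 - p))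
    (I : Finset ι) (F : Finset ι → ℝ) :
    ∫ x, F (I.filter fun i => x i = true) ∂ν = bernAvg p I F := by
  have hset : ∀ S ∈ I.powerset, {x : ι → Bool | (I.filter fun i => x i = true) = S} =
      {x | ∀ i ∈ I, x i = decide (i ∈ S)} := by
    intro S hS
    have hS := Finset.mem_powerset.1 hS
    ext x
    simp only [Set.mem_ofPred_eq, Finset.ext_iff, Finset.mem_filter]
    constructor
    · intro h i hi
      rw [Bool.eq_iff_iff]
      simp [← h i, hi]
    · intro h i
      by_cases hi : i ∈ I
      · simp [hi, h i hi]
      · simpa [hi] using fun h => hi (hS h)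
  have hmeas : ∀ S ∈ I.powerset,
      MeasurableSet {x : ι → Bool | (I.filter fun i => x i = true) = S} := by
    intro S hS
    rw [hset S hS]
    simp only [Set.ofPred_forall]
    exact Finset.measurableSet_biInter I fun i _ =>
      measurableSet_eq_fun (measurable_pi_apply i) measurable_const
  have hexp : ∀ x : ι → Bool, F (I.filter fun i => x i = true) =
      ∑ S ∈ I.powerset, {x : ι → Bool | (I.filter fun i => x i = true) = S}.indicator
        (fun _ => F S) x := by
    intro x
    simp [Set.indicator_apply, Finset.filter_subset]
  simp_rw [hexp]
  rw [integral_finsetSum _ fun S hS => (integrable_const _).indicator (hmeas S hS)]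
  refine Finset.sum_congr rfl fun S hS => ?_
  rw [integral_indicator_const _ (hmeas S hS), hset S hS, Measure.real, hν, smul_eq_mul]
  congr 1
  have hS := Finset.mem_powerset.1 hS
  have h0 := hp.1
  have h1 := sub_nonneg.2 hp.2
  rw [ENNReal.toReal_prod, ← Finset.card_sdiff_of_subset hS, ← Finset.prod_sdiff hS, mul_comm]
  congr 1
  · rw [Finset.prod_congr rfl (g := fun _ => p)]
    · simp
    · intro i hi; simp [hi, h0]
  · rw [Finset.prod_congr rfl (g := fun _ => 1 - p)]
    · simp
    · intro i hi; simp [(Finset.mem_sdiff.1 hi).2, hp.2]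

end Bernoulli

/-! ### Conditional entropies of the limiting measure -/

section Limit

variable {I A : Type*} [Fintype A] [MeasurableSpace A] (μ : Measure (I → A))

lemma margM_nonneg (B : Finset I) (η : {i // i ∈ B} → A) : 0 ≤ margM μ B η :=
  ENNReal.toReal_nonneg

variable [MeasurableSingletonClass A] [IsProbabilityMeasure μ]

lemma sum_margM_filter (B : Finset I) (s : Finset ({i // i ∈ B} → A)) :
    ∑ ξ ∈ s, margM μ B ξ = μ.real {x | (fun i : B => x i) ∈ s} := by
  have hm : Measurable fun (x : I → A) (i : B) => x i := by fun_prop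
  have h := sum_measureReal_preimage_singleton (μ := μ) s
    (f := fun (x : I → A) (i : B) => x i) (fun y _ => hm (measurableSet_singleton y))
  refine Eq.trans (Finset.sum_congr rfl fun ξ _ => ?_) h
  rw [margM, Measure.real]
  congr 2
  ext x
  simp [funext_iff]

lemma sum_margM (B : Finset I) : ∑ ξ, margM μ B ξ = 1 := by
  simp [sum_margM_filter]

variable [Nonempty A]

lemma margM_eq_jointLaw {B T : Finset I} (h : T ⊆ B) :
    margM μ T = jointLaw (margM μ B) (coordExt B) T := by
  ext η
  rw [jointLaw, ← Finset.sum_filter, sum_margM_filter, margM, Measure.real]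
  congr 2
  ext x
  simp only [Set.mem_ofPred_eq, Finset.mem_filter, Finset.mem_univ, true_and]
  refine forall_congr' fun i => ?_
  simp [coordExt, h i.2]

lemma condEntM_eq {B T : Finset I} {v : I} (hv : v ∈ B) (h : T ⊆ B) :
    condEntM μ v T = jointEnt (margM μ B) (coordExt B) (insert v T) -
      jointEnt (margM μ B) (coordExt B) T := by
  rw [condEntM, margM_eq_jointLaw μ h, margM_eq_jointLaw μ (Finset.insert_subset hv h)]
  rfl

lemma condEntM_nonneg (v : I) (T : Finset I) : 0 ≤ condEntM μ v T := by
  rw [condEntM_eq μ (Finset.mem_insert_self v T) (Finset.subset_insert v T)]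
  exact sub_nonneg.2 (jointEnt_mono (margM_nonneg μ _) _ _ _)

lemma condEntM_le_log_card (v : I) (T : Finset I) :
    condEntM μ v T ≤ Real.log (Fintype.card A) := by
  rw [condEntM_eq μ (Finset.mem_insert_self v T) (Finset.subset_insert v T)]
  exact jointEnt_insert_sub_le (margM_nonneg μ _) (sum_margM μ _) _ _ _

lemma condEntM_antitone (v : I) : Antitone (condEntM μ v) := by
  intro T S h
  rw [condEntM_eq μ (Finset.mem_insert_self v S) (Finset.subset_insert v S),
    condEntM_eq μ (Finset.mem_insert_self v S) (h.trans (Finset.subset_insert v S))]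
  exact jointEnt_submodular (margM_nonneg μ _) _ _ h

lemma tendsto_condEntM_condEntInf (v : I) (S : Set I) {T : ℕ → Finset I} (hT : Monotone T)
    (hTS : (⋃ r, (T r : Set I)) = S) :
    Tendsto (fun r => condEntM μ v (T r)) atTop (nhds (condEntInf μ v S)) := by
  have hsub : ∀ r, (T r : Set I) ⊆ S := fun r => hTS ▸ Set.subset_iUnion (fun r => (T r : Set I)) r
  have h := tendsto_atTop_ciInf (f := fun r => condEntM μ v (T r))
    (fun r s hrs => condEntM_antitone μ v (hT hrs))
    ⟨0, by rintro _ ⟨k, rfl⟩; exact condEntM_nonneg μ v _⟩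
  convert h using 2
  have : Nonempty {T : Finset I // (T : Set I) ⊆ S} := ⟨⟨T 0, hsub 0⟩⟩
  refine le_antisymm (le_ciInf fun r => ?_) (le_ciInf fun U => ?_)
  · exact ciInf_le (f := fun U : {T : Finset I // (T : Set I) ⊆ S} => condEntM μ v U)
      ⟨0, by rintro _ ⟨k, rfl⟩; exact condEntM_nonneg μ v _⟩ ⟨T r, hsub r⟩
  · have hdir : Directed (· ⊆ ·) fun r => (T r : Set I) :=
      Monotone.directed_le (f := fun r => (T r : Set I)) fun r s hrs => by
        simpa using hT hrs
    obtain ⟨r, hr⟩ := hdir.exists_mem_subset_of_finset_subset_biUnion (s := U.1) (hTS.symm ▸ U.2)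
    exact (ciInf_le ⟨0, by rintro _ ⟨k, rfl⟩; exact condEntM_nonneg μ v _⟩ r).trans
      (condEntM_antitone μ v (by exact_mod_cast hr))

end Limit

/-- The percolative entropy is the limit of its restrictions to the balls. -/
lemma tendsto_integral_bernAvg_Hperc {Γ A : Type*} [Group Γ]
    [Fintype A] [Nonempty A] [MeasurableSpace A] [MeasurableSingletonClass A]
    {B : ℕ → Finset Γ} (hBmono : Monotone B)
    (hBcover : (⋃ r, (B r : Set Γ)) = Set.univ)
    (μ : Measure (Γ → A)) [IsProbabilityMeasure μ]
    {θ : ℝ → Measure (Γ → Bool)} (hθprob : ∀ p, IsProbabilityMeasure (θ p))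
    (hθ : ∀ p ∈ Set.Icc (0:ℝ) 1, ∀ (T : Finset Γ) (g : Γ → Bool),
      θ p {x | ∀ i ∈ T, x i = g i} =
        ∏ i ∈ T, ENNReal.ofReal (if g i then p else 1 - p)) :
    Tendsto (fun r => ∫ p in (0 : ℝ)..1,
      bernAvg p (B r) (fun S => condEntM μ (1 : Γ) (S.erase 1))) atTop (nhds (Hperc θ μ)) := by
  have habs : ∀ T : Finset Γ, |condEntM μ (1 : Γ) T| ≤ Real.log (Fintype.card A) := fun T => by
    rw [abs_of_nonneg (condEntM_nonneg μ _ _)]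
    exact condEntM_le_log_card μ _ _
  have hIoc : ∀ p ∈ Set.uIoc (0 : ℝ) 1, p ∈ Set.Icc (0 : ℝ) 1 := fun p hp => by
    rw [Set.uIoc_of_le zero_le_one] at hp
    exact ⟨hp.1.le, hp.2⟩
  refine intervalIntegral.tendsto_integral_filter_of_dominated_convergence
    (fun _ => Real.log (Fintype.card A)) ?_ ?_ ?_ ?_
  · exact .of_forall fun r => (continuous_bernAvg _ _).aestronglyMeasurable
  · refine .of_forall fun r => .of_forall fun p hp => ?_
    rw [Real.norm_eq_abs, abs_le]
    constructor
    · rw [← bernAvg_const (p := p) (I := B r) (-Real.log (Fintype.card A))]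
      exact bernAvg_mono (hIoc p hp) fun S _ => (abs_le.1 (habs _)).1
    · rw [← bernAvg_const (p := p) (I := B r) (Real.log (Fintype.card A))]
      exact bernAvg_mono (hIoc p hp) fun S _ => (abs_le.1 (habs _)).2
  · exact intervalIntegrable_const
  · refine .of_forall fun p hp => ?_
    have := hθprob p
    simp_rw [← integral_filter_eq_bernAvg (hIoc p hp) (hθ p (hIoc p hp))]
    refine tendsto_integral_of_dominated_convergence (fun _ => Real.log (Fintype.card A)) ?_
      (integrable_const _) ?_ ?_
    · intro r
      have hm : Measurable fun (x : Γ → Bool) (i : B r) => x i := by fun_prop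
      have hF : Measurable fun y : B r → Bool => condEntM μ (1 : Γ)
          ((((B r).attach.filter fun i => y i = true).map (Function.Embedding.subtype _)).erase 1) :=
        measurable_of_finite _
      have := hF.comp hm
      refine Measurable.aestronglyMeasurable ?_
      convert this using 1
      ext x
      simp only [Function.comp_apply]
      congr 2
      ext i
      simp [and_comm]
    · exact fun r => .of_forall fun x => habs _
    · refine .of_forall fun x => tendsto_condEntM_condEntInf μ 1 _ ?_ ?_
      · exact fun r s hrs => Finset.erase_subset_erase _
          (Finset.filter_subset_filter _ (hBmono hrs))
      · ext g
        have hg : ∃ r, g ∈ B r := by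
          simpa using (Set.ext_iff.1 hBcover g).2 trivial
        simp [hg, and_comm]

/-! ### Comparison of the finite measures with the limit -/

lemma exists_tvDist_forall_abs_sub_lt {Ω κ : Type*} [Fintype Ω] (q₀ : Ω → ℝ)
    (D : κ → (Ω → ℝ) → ℝ) (hD : ∀ k, Continuous (D k)) (s : Finset κ) {ε : ℝ} (hε : 0 < ε) :
    ∃ δ > 0, ∀ q, tvDist q q₀ ≤ δ → ∀ k ∈ s, |D k q - D k q₀| < ε := by
  have h : ∀ᶠ q in nhds q₀, ∀ k ∈ s, |D k q - D k q₀| < ε := by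
    rw [Filter.eventually_all_finset]
    intro k _
    exact (Metric.tendsto_nhds.1 ((hD k).tendsto q₀) ε hε).mono fun q hq => by
      rwa [Real.dist_eq] at hq
  obtain ⟨δ, hδ, hball⟩ := Metric.eventually_nhds_iff.1 h
  refine ⟨δ / 4, by positivity, fun q hq => hball ?_⟩
  refine (dist_pi_lt_iff hδ).2 fun ω => ?_
  have h1 : |q ω - q₀ ω| ≤ ∑ ω, |q ω - q₀ ω| :=
    Finset.single_le_sum (f := fun ω => |q ω - q₀ ω|) (fun _ _ => abs_nonneg _)
      (Finset.mem_univ ω)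
  rw [tvDist] at hq
  rw [Real.dist_eq]
  linarith

lemma shEnt_nonneg {Ω : Type*} [Fintype Ω] {p : Ω → ℝ} (hp : ∀ ω, 0 ≤ p ω)
    (hp1 : ∑ ω, p ω = 1) : 0 ≤ shEnt p := by
  rw [shEnt, ← Finset.sum_neg_distrib]
  refine Finset.sum_nonneg fun ω _ => ?_
  have : p ω ≤ 1 := hp1 ▸ Finset.single_le_sum (fun ω _ => hp ω) (Finset.mem_univ ω)
  exact neg_nonneg.2 (mul_nonpos_of_nonneg_of_nonpos (hp ω) (Real.log_nonpos (hp ω) this))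

section Comparison

variable {Γ A W : Type*} [Group Γ] [Fintype A] [Nonempty A] [Fintype W]

lemma bernAvg_jointEnt_le_pushName {B : Finset Γ} (hB : (1 : Γ) ∈ B) (γ : Γ →* Equiv.Perm W)
    {m : (W → A) → ℝ} (hm : ∀ x, 0 ≤ m x) {v : W}
    (hinj : Set.InjOn (fun g : Γ => γ g v) B) {p : ℝ} (hp : p ∈ Set.Icc (0 : ℝ) 1) :
    bernAvg p Finset.univ (fun S => jointEnt m (fun i x => x i) (insert v S) -
        jointEnt m (fun i x => x i) (S.erase v)) ≤
      bernAvg p B (fun S =>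
        jointEnt (pushName B γ m v) (coordExt B) (insert (1 : Γ) (S.erase 1)) -
        jointEnt (pushName B γ m v) (coordExt B) (S.erase 1)) := by
  set f : Γ → W := fun g => γ g v with hf
  have hf1 : f 1 = v := by simp [hf]
  set D : Finset W → ℝ := fun T => jointEnt m (fun i x => x i) (insert v T) -
    jointEnt m (fun i x => x i) T with hD
  calc bernAvg p Finset.univ (fun S => jointEnt m (fun i x => x i) (insert v S) -
        jointEnt m (fun i x => x i) (S.erase v))
      ≤ bernAvg p (B.image f ∪ Finset.univ) (fun S => D ((S ∩ B.image f).erase v)) := by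
        rw [Finset.union_eq_right.2 (Finset.subset_univ _)]
        refine bernAvg_mono hp fun S _ => ?_
        have hins : insert v S = insert v (S.erase v) := by ext; simp; tauto
        rw [hins]
        exact jointEnt_submodular hm _ v
          (Finset.erase_subset_erase _ Finset.inter_subset_left)
    _ = bernAvg p B (fun S => D ((S.image f).erase v)) := by
        rw [bernAvg_inter (F := fun T => D (T.erase v)), bernAvg_image B f hinj]
    _ = _ := by
        refine bernAvg_congr fun S hS => ?_
        have herase : (S.image f).erase v = (S.erase 1).image f := by
          ext w
          simp only [Finset.mem_erase, Finset.mem_image]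
          constructor
          · rintro ⟨hw, g, hg, rfl⟩
            exact ⟨g, ⟨fun h => hw (h ▸ hf1), hg⟩, rfl⟩
          · rintro ⟨g, ⟨hg1, hg⟩, rfl⟩
            exact ⟨fun h => hg1 (hinj (hS hg) hB (h.trans hf1.symm)), g, hg, rfl⟩
        have hSB : S.erase 1 ⊆ B := (Finset.erase_subset _ _).trans hS
        have hins : insert v ((S.erase 1).image f) = (insert 1 (S.erase 1)).image f := by
          rw [Finset.image_insert, hf1]
        rw [herase, hD]
        dsimp only
        rw [hins, jointEnt_image, jointEnt_image,
          ← jointEnt_jointLaw (B := B) _ (Finset.insert_subset hB hSB),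
          ← jointEnt_jointLaw (B := B) _ hSB]
        rfl

lemma shEnt_div_card_le [Nonempty W] [MeasurableSpace A] [MeasurableSingletonClass A]
    {B : Finset Γ} (hB : (1 : Γ) ∈ B)
    (μ : Measure (Γ → A)) [IsProbabilityMeasure μ] (γ : Γ →* Equiv.Perm W)
    {m : (W → A) → ℝ} (hm : ∀ x, 0 ≤ m x) (hm1 : ∑ x, m x = 1) {ε δ : ℝ} (hε : 0 ≤ ε)
    (hclose : ∀ v, tvDist (pushName B γ m v) (margM μ B) ≤ δ → ∀ S ⊆ B,
      jointEnt (pushName B γ m v) (coordExt B) (insert (1 : Γ) (S.erase 1)) -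
        jointEnt (pushName B γ m v) (coordExt B) (S.erase 1) ≤
      condEntM μ (1 : Γ) (S.erase 1) + ε) :
    shEnt m / Fintype.card W ≤
      (∫ p in (0 : ℝ)..1, bernAvg p B (fun S => condEntM μ (1 : Γ) (S.erase 1))) + ε +
      (((Finset.univ.filter fun v : W => ¬ Set.InjOn (fun g : Γ => γ g v) B).card : ℝ) /
          Fintype.card W +
        ((Finset.univ.filter fun v : W =>
          δ < tvDist (pushName B γ m v) (margM μ B)).card : ℝ) / Fintype.card W) *
        Real.log (Fintype.card A) := by
  have hN : (0 : ℝ) < Fintype.card W := by exact_mod_cast Fintype.card_pos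
  have hlog : 0 ≤ Real.log (Fintype.card A) :=
    Real.log_nonneg (by exact_mod_cast Fintype.card_pos)
  set L := Real.log (Fintype.card A)
  set e : ℝ → ℝ := fun p => bernAvg p B (fun S => condEntM μ (1 : Γ) (S.erase 1)) with he
  set b₁ := Finset.univ.filter fun v : W => ¬ Set.InjOn (fun g : Γ => γ g v) B
  set b₂ := Finset.univ.filter fun v : W => δ < tvDist (pushName B γ m v) (margM μ B)
  have hpt : ∀ p ∈ Set.Icc (0 : ℝ) 1, ∀ v : W,
      bernAvg p Finset.univ (fun S => jointEnt m (fun i x => x i) (insert v S) -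
        jointEnt m (fun i x => x i) (S.erase v)) ≤
      e p + ε + (if v ∈ b₁ then L else 0) + (if v ∈ b₂ then L else 0) := by
    intro p hp v
    have he0 : 0 ≤ e p := by
      rw [← bernAvg_const (p := p) (I := B) 0]
      exact bernAvg_mono hp fun S _ => condEntM_nonneg μ _ _
    have hle : bernAvg p Finset.univ (fun S => jointEnt m (fun i x => x i) (insert v S) -
        jointEnt m (fun i x => x i) (S.erase v)) ≤ L := by
      rw [← bernAvg_const (p := p) (I := (Finset.univ : Finset W)) L]
      refine bernAvg_mono hp fun S _ => ?_
      have hins : insert v S = insert v (S.erase v) := by ext; simp; tauto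
      rw [hins]
      exact jointEnt_insert_sub_le hm hm1 _ _ _
    by_cases h1 : v ∈ b₁
    · rw [if_pos h1]
      split_ifs <;> linarith
    by_cases h2 : v ∈ b₂
    · rw [if_pos h2, if_neg h1]
      linarith
    rw [if_neg h1, if_neg h2, add_zero, add_zero]
    refine (bernAvg_jointEnt_le_pushName hB γ hm (by simpa [b₁] using h1) hp).trans ?_
    rw [he, ← bernAvg_add_const]
    exact bernAvg_mono hp (hclose v (by simpa [b₂] using h2))
  have hent : shEnt m = ∫ p in (0 : ℝ)..1, ∑ v, bernAvg p Finset.univ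
      (fun S => jointEnt m (fun i x => x i) (insert v S) -
        jointEnt m (fun i x => x i) (S.erase v)) := by
    rw [integral_sum_bernAvg Finset.univ (jointEnt m fun i x => x i), jointEnt_empty hm1,
      sub_zero, shEnt_eq_jointEnt_univ]
  have hec : Continuous e := continuous_bernAvg _ _
  have hint : shEnt m ≤ ∫ p in (0 : ℝ)..1,
      (Fintype.card W * e p + (Fintype.card W * ε + (b₁.card * L + b₂.card * L))) := by
    rw [hent]
    refine intervalIntegral.integral_mono_on zero_le_one
      ((continuous_finsetSum _ fun v _ => continuous_bernAvg _ _).intervalIntegrable _ _)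
      (Continuous.intervalIntegrable (by fun_prop) _ _) fun p hp => ?_
    refine (Finset.sum_le_sum fun v _ => hpt p hp v).trans (le_of_eq ?_)
    simp [Finset.sum_add_distrib]
    ring
  rw [intervalIntegral.integral_add (Continuous.intervalIntegrable (by fun_prop) _ _)
    intervalIntegrable_const, intervalIntegral.integral_const_mul,
    intervalIntegral.integral_const] at hint
  rw [div_le_iff₀ hN]
  refine hint.trans (le_of_eq ?_)
  simp only [sub_zero, one_smul]
  field_simp
  ring

end Comparison

/-- if the Gibbs measures `μ_n` on locally tree-like `d`-regular
graphs converge in the local weak* sense to the translation-invariant measure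
`μ` on `A^{V(T_d)}` (the tree identified with the group `Γ`, with balls `B r`),
then `limsup_n H(μ_n)/|V_n| ≤ H_perc(μ)`. -/
theorem limsup_entropy_le_Hperc {Γ A : Type*} [Group Γ] [Countable Γ]
    [Fintype A] [Nonempty A] [MeasurableSpace A] [MeasurableSingletonClass A]
    -- the balls of the tree `T_d`, identified with subsets of `Γ`
    (B : ℕ → Finset Γ) (hB1 : ∀ r, (1 : Γ) ∈ B r) (hBmono : Monotone B)
    (hBcover : (⋃ r, (B r : Set Γ)) = Set.univ)
    -- the limiting translation-invariant Gibbs measure on the tree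
    (μ : Measure (Γ → A)) [IsProbabilityMeasure μ]
    (hinv : ∀ g : Γ, Measure.map (fun x : Γ → A => fun h => x (h * g)) μ = μ)
    -- Bernoulli(p) site percolation on the tree
    (θ : ℝ → Measure (Γ → Bool)) (hθprob : ∀ p, IsProbabilityMeasure (θ p))
    (hθ : ∀ p ∈ Set.Icc (0:ℝ) 1, ∀ (T : Finset Γ) (g : Γ → Bool),
      θ p {x | ∀ i ∈ T, x i = g i} =
        ∏ i ∈ T, ENNReal.ofReal (if g i then p else 1 - p))
    -- the finite graphs, encoded by their vertex sets and homomorphisms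
    (V : ℕ → Type*) [∀ n, Fintype (V n)] [∀ n, Nonempty (V n)]
    (γn : ∀ n, Γ →* Equiv.Perm (V n))
    -- local convergence to the tree: most `r`-balls are isomorphic to `B r`
    (hlocal : ∀ r : ℕ, Tendsto (fun n =>
        ((Finset.univ.filter (fun v : V n =>
            Set.InjOn (fun g : Γ => (γn n) g v) (B r))).card : ℝ) /
          (Fintype.card (V n) : ℝ)) atTop (nhds 1))
    -- the Gibbs measures on the finite graphs
    (μn : ∀ n, (V n → A) → ℝ)
    (hpos : ∀ n x, 0 ≤ μn n x) (hsum : ∀ n, ∑ x, μn n x = 1)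
    -- local weak* convergence `μ_n → μ`
    (hlw : ∀ (r : ℕ) (δ : ℝ), 0 < δ → Tendsto (fun n =>
        ((Finset.univ.filter (fun v : V n =>
            δ < tvDist (pushName (B r) (γn n) (μn n) v) (margM μ (B r)))).card : ℝ) /
          (Fintype.card (V n) : ℝ)) atTop (nhds 0)) :
    limsup (fun n => shEnt (μn n) / (Fintype.card (V n) : ℝ)) atTop ≤
      Hperc θ μ := by
  refine le_of_forall_pos_le_add fun ε hε => ?_
  have hε4 : 0 < ε / 4 := by positivity
  obtain ⟨r, hr⟩ : ∃ r, ∫ p in (0 : ℝ)..1,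
      bernAvg p (B r) (fun S => condEntM μ (1 : Γ) (S.erase 1)) < Hperc θ μ + ε / 4 := by
    have hlim := tendsto_integral_bernAvg_Hperc hBmono hBcover μ hθprob hθ
    exact (hlim.eventually_lt_const (lt_add_of_pos_right _ hε4)).exists
  let D : Finset Γ → (({g // g ∈ B r} → A) → ℝ) → ℝ := fun S q =>
    jointEnt q (coordExt (B r)) (insert (1 : Γ) (S.erase 1)) -
      jointEnt q (coordExt (B r)) (S.erase 1)
  have hD : ∀ S, Continuous (D S) := fun S =>
    (continuous_jointEnt (coordExt (B r)) (insert (1 : Γ) (S.erase 1))).sub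
      (continuous_jointEnt (coordExt (B r)) (S.erase 1))
  obtain ⟨δ, hδ, hδε⟩ :=
    exists_tvDist_forall_abs_sub_lt (margM μ (B r)) D hD (B r).powerset hε4
  have hbad : ∀ᶠ n in atTop,
      (((Finset.univ.filter fun v : V n => ¬ Set.InjOn (fun g : Γ => (γn n) g v) (B r)).card : ℝ) /
          Fintype.card (V n) +
        ((Finset.univ.filter fun v : V n =>
          δ < tvDist (pushName (B r) (γn n) (μn n) v) (margM μ (B r))).card : ℝ) /
          Fintype.card (V n)) * Real.log (Fintype.card A) < ε / 4 := by
    have hlim := (((hlocal r).const_sub 1).add (hlw r δ hδ)).mul_const (Real.log (Fintype.card A))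
    simp only [sub_self, add_zero, zero_mul] at hlim
    filter_upwards [hlim.eventually_lt_const hε4] with n hn
    have hN : (0 : ℝ) < Fintype.card (V n) := by exact_mod_cast Fintype.card_pos
    have hcompl : ((Finset.univ.filter fun v : V n =>
        ¬ Set.InjOn (fun g : Γ => (γn n) g v) (B r)).card : ℝ) / Fintype.card (V n) =
        1 - ((Finset.univ.filter fun v : V n =>
          Set.InjOn (fun g : Γ => (γn n) g v) (B r)).card : ℝ) / Fintype.card (V n) := by
      rw [eq_sub_iff_add_eq, ← add_div, div_eq_one_iff_eq hN.ne', add_comm]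
      exact_mod_cast Finset.card_filter_add_card_filter_not (s := (Finset.univ : Finset (V n)))
        fun v => Set.InjOn (fun g : Γ => (γn n) g v) (B r)
    rw [hcompl]
    exact hn
  refine limsup_le_of_le ?_ ?_
  · refine IsCoboundedUnder.of_frequently_ge (a := 0) (Frequently.of_forall fun n => ?_)
    exact div_nonneg (shEnt_nonneg (hpos n) (hsum n)) (by positivity)
  filter_upwards [hbad] with n hn
  have hmain := shEnt_div_card_le (hB1 r) μ (γn n) (hpos n) (hsum n) (δ := δ) hε4.le
    (fun v hv S hS => ?_)
  · linarith
  have := (abs_lt.1 (hδε _ hv S (Finset.mem_powerset.2 hS))).2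
  rw [condEntM_eq μ (hB1 r) ((Finset.erase_subset _ _).trans hS)]
  linarith
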